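/- Structural bound for the block Krylov log-determinant estimator (Theorem 6): under the stated assumptions, det(I_n + A) and det(I_{ql} + T) are positive reals and 0 ≤ log det(I_n + A) − log det(I_{ql} + T) ≤ Σ_{i=k+1}^n log(1 + η·λ_i) + Σ_{i=k+1}^n log(1 + λ_i), where η = (λ_{k+1}/λ_k) · T_{q−1}(γ)^{−2} · ‖Ω̂₂Ω̂₁†‖₂² (the two sums equal log det(I_{n−k} + ηΛ₂) and log det(I_{n−k} + Λ₂), respectively). -/

import Mathlib

/-!
In the eigenbasis of `A` the projected matrix is `T = Rᴴ * Λ * R`, with `R = Uᴴ * Q` an isometry.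
That `det (1 + T) ≤ det (1 + A)` is the monotonicity of the determinant in the Loewner order
(`det_le_det_add`) combined with `R * Rᴴ ≤ 1` (`det_one_add_compress_le`).

For the upper bound, let `φ(x) = x * T_{q-1}(2x/λ_{k+1} - 1)`. Since `φ` has degree at most `q` and
no constant term, `φ(A) * Ω` lies in the Krylov space. Multiplying on the right by
`Ω₁† * φ(Λ₁)⁻¹` produces a matrix `Z` with columns in the range of `R` and block rows `1` and
`F = φ(Λ₂) * Ω₂ * Ω₁† * φ(Λ₁)⁻¹`. The projector onto the range of `Z` lies below `R * Rᴴ`, so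
`det (1 + T)` is at least `det (1 + M)` for `M = Λ₁^{1/2} * (1 + Fᴴ * F)⁻¹ * Λ₁^{1/2}`. On the
other hand `(1 + Fᴴ * F)⁻¹ ≥ 1 - Fᴴ * F` gives
`1 + Λ₁ ≤ 1 + M + Λ₁^{1/2} * Fᴴ * F * Λ₁^{1/2}`, and the matrix determinant lemma bounds the
determinant of the right-hand side by `det (1 + M) * det (1 + F * Λ₁ * Fᴴ)`; this is
`det_one_add_sq_le`.

Finally `F * Λ₁ * Fᴴ ≤ η Λ₂` (`posSemidef_diagonal_sub`): `|T_{q-1}| ≤ 1` on `[-1, 1]` gives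
`φ(Λ₂)² ≤ λ_{k+1} Λ₂`, and monotonicity of `T_{q-1}` on `[1, ∞)` gives
`Λ₁ φ(Λ₁)⁻² ≤ 1 / (λ_k T_{q-1}(γ)²)`. Hence `det (1 + Λ₁) ≤ det (1 + T) * det (1 + η Λ₂)`, and the
remaining factor `det (1 + Λ₂)` of `det (1 + A)` is the second sum of the bound.
-/

open Matrix

/-- Spectral (operator 2-) norm of a complex matrix: the operator norm of the
induced map between Euclidean spaces, i.e. the largest singular value. -/
noncomputable def specNorm {m n : ℕ} (M : Matrix (Fin m) (Fin n) ℂ) : ℝ :=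
  ‖LinearMap.toContinuousLinearMap (Matrix.toEuclideanLin M)‖

/-! ### Determinants in the Loewner order -/

section LoewnerDeterminants

set_option linter.unusedSectionVars false

open scoped ComplexOrder MatrixOrder

variable {m n a b : Type*} [Fintype m] [DecidableEq m] [Fintype n] [DecidableEq n]
  [Fintype a] [DecidableEq a] [Fintype b] [DecidableEq b]

lemma exists_conjTranspose_mul_self {X : Matrix n n ℂ} (hX : X.PosSemidef) :
    ∃ C : Matrix n n ℂ, X = Cᴴ * C :=
  CStarAlgebra.nonneg_iff_eq_star_mul_self.mp (nonneg_iff_posSemidef.mpr hX)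

lemma posDef_one_add {S : Matrix n n ℂ} (hS : S.PosSemidef) : (1 + S).PosDef :=
  PosDef.one.add_posSemidef hS

lemma one_le_det_one_add {S : Matrix n n ℂ} (hS : S.PosSemidef) : 1 ≤ (1 + S).det := by
  have hH := posDef_one_add hS
  have h1 : ∀ i, 1 ≤ hH.1.eigenvalues i := by
    intro i
    rw [hH.1.eigenvalues_eq]
    set v := hH.1.eigenvectorBasis i with hv
    have hn : star (v : n → ℂ) ⬝ᵥ (v : n → ℂ) = 1 := by
      have := (hH.1.eigenvectorBasis).orthonormal.1 i
      have h2 : inner ℂ v v = (1 : ℂ) := by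
        rw [inner_self_eq_norm_sq_to_K, this]; simp
      rw [EuclideanSpace.inner_eq_star_dotProduct] at h2
      rw [dotProduct_comm]; exact h2
    rw [add_mulVec, one_mulVec, dotProduct_add, hn, map_add]
    have := hS.re_dotProduct_nonneg (v : n → ℂ)
    simpa using this
  rw [hH.1.det_eq_prod_eigenvalues]
  have : (1 : ℝ) ≤ ∏ i, hH.1.eigenvalues i := Finset.one_le_prod (fun i _ => h1 i)
  simpa using Complex.real_le_real.mpr this

/-- The determinant is monotone for the Loewner order: for `E = Cᴴ * C` the matrix determinant
lemma gives `det (M + E) = det M * det (1 + C * M⁻¹ * Cᴴ)`, and the last factor is at least `1`. -/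
lemma det_le_det_add {M E : Matrix n n ℂ} (hM : M.PosDef) (hE : E.PosSemidef) :
    M.det ≤ (M + E).det := by
  obtain ⟨C, rfl⟩ := exists_conjTranspose_mul_self hE
  rw [det_add_mul _ _ ((isUnit_iff_isUnit_det _).mp hM.isUnit)]
  have := one_le_det_one_add (hM.inv.posSemidef.mul_mul_conjTranspose_same C)
  exact le_mul_of_one_le_right hM.det_pos.le this

lemma det_le_det_of_sub {M M' : Matrix n n ℂ} (hM : M.PosDef) (h : (M' - M).PosSemidef) :
    M.det ≤ M'.det := by
  simpa using det_le_det_add hM h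

lemma posSemidef_one_sub_mul_conjTranspose {R : Matrix n m ℂ} (hR : Rᴴ * R = 1) :
    (1 - R * Rᴴ).PosSemidef := by
  have h : 1 - R * Rᴴ = (1 - R * Rᴴ)ᴴ * (1 - R * Rᴴ) := by
    simp only [conjTranspose_sub, conjTranspose_one, conjTranspose_mul, conjTranspose_conjTranspose]
    have : R * Rᴴ * (R * Rᴴ) = R * Rᴴ := by
      rw [Matrix.mul_assoc, ← Matrix.mul_assoc Rᴴ, hR, Matrix.one_mul]
    rw [sub_mul, mul_sub, mul_sub, this]; simp
  rw [h]
  exact posSemidef_conjTranspose_mul_self _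

/-- Compressing a positive semidefinite matrix by an isometry does not increase `det (1 + ·)`. -/
lemma det_one_add_compress_le {X : Matrix n n ℂ} (hX : X.PosSemidef) {R : Matrix n m ℂ}
    (hR : Rᴴ * R = 1) : (1 + Rᴴ * X * R).det ≤ (1 + X).det := by
  obtain ⟨C, rfl⟩ := exists_conjTranspose_mul_self hX
  have e : Rᴴ * (Cᴴ * C) * R = (Rᴴ * Cᴴ) * (C * R) := by simp only [Matrix.mul_assoc]
  rw [e, det_one_add_mul_comm, det_one_add_mul_comm Cᴴ]
  refine det_le_det_of_sub (posDef_one_add ?_) ?_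
  · have : C * R * (Rᴴ * Cᴴ) = (C * R) * (C * R)ᴴ := by simp
    rw [this]; exact posSemidef_self_mul_conjTranspose _
  · have := (posSemidef_one_sub_mul_conjTranspose hR).mul_mul_conjTranspose_same C
    convert this using 1
    simp only [Matrix.mul_assoc, Matrix.mul_sub, Matrix.sub_mul, Matrix.one_mul]
    abel

/-- If the columns of `Z` lie in the range of the isometry `R`, then the orthogonal projector
`Z * (Zᴴ * Z)⁻¹ * Zᴴ` lies below the orthogonal projector `R * Rᴴ`. -/
lemma posSemidef_projector_sub {R : Matrix n m ℂ} (hR : Rᴴ * R = 1) {Z : Matrix n a ℂ}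
    (hZ : R * Rᴴ * Z = Z) (hN : (Zᴴ * Z).PosDef) :
    (R * Rᴴ - Z * (Zᴴ * Z)⁻¹ * Zᴴ).PosSemidef := by
  set N := Zᴴ * Z with hNdef
  set P := R * Rᴴ with hP
  have hPH : Pᴴ = P := by simp [hP]
  have hZ' : Zᴴ * P = Zᴴ := by
    have := congrArg conjTranspose hZ
    rwa [conjTranspose_mul, hPH] at this
  have hPP : P * P = P := by
    rw [hP, Matrix.mul_assoc, ← Matrix.mul_assoc Rᴴ, hR, Matrix.one_mul]
  have hNu : IsUnit N.det := (isUnit_iff_isUnit_det _).mp hN.isUnit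
  have hSS : Z * N⁻¹ * Zᴴ * (Z * N⁻¹ * Zᴴ) = Z * N⁻¹ * Zᴴ := by
    calc Z * N⁻¹ * Zᴴ * (Z * N⁻¹ * Zᴴ) = Z * (N⁻¹ * N) * N⁻¹ * Zᴴ := by
          rw [hNdef]; simp only [Matrix.mul_assoc]
      _ = _ := by rw [nonsing_inv_mul _ hNu, Matrix.mul_one]
  have hPS : P * (Z * N⁻¹ * Zᴴ) = Z * N⁻¹ * Zᴴ := by
    rw [← Matrix.mul_assoc, ← Matrix.mul_assoc, hZ]
  have hSP : Z * N⁻¹ * Zᴴ * P = Z * N⁻¹ * Zᴴ := by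
    rw [Matrix.mul_assoc, hZ']
  have hSH : (Z * N⁻¹ * Zᴴ)ᴴ = Z * N⁻¹ * Zᴴ := by
    simp only [conjTranspose_mul, conjTranspose_conjTranspose, hN.inv.1.eq, Matrix.mul_assoc]
  have h : P - Z * N⁻¹ * Zᴴ = (P - Z * N⁻¹ * Zᴴ)ᴴ * (P - Z * N⁻¹ * Zᴴ) := by
    rw [conjTranspose_sub, hPH, hSH, sub_mul, mul_sub, mul_sub, hPP, hPS, hSP, hSS]; abel
  rw [h]
  exact posSemidef_conjTranspose_mul_self _

lemma posSemidef_one_sub_inv {M : Matrix n n ℂ} (hM : M.PosSemidef) :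
    (1 - (1 + M)⁻¹).PosSemidef := by
  have hK := posDef_one_add hM
  have hu : IsUnit (1 + M).det := (isUnit_iff_isUnit_det _).mp hK.isUnit
  have h := (hM.add (posSemidef_conjTranspose_mul_self M)).mul_mul_conjTranspose_same (1 + M)⁻¹
  convert h using 1
  rw [hK.inv.1.eq, hM.1.eq]
  have e : M + M * M = (1 + M) * ((1 + M) - 1) := by noncomm_ring
  rw [e, ← Matrix.mul_assoc (1 + M)⁻¹, nonsing_inv_mul _ hu, Matrix.one_mul, Matrix.sub_mul,
    mul_nonsing_inv _ hu, Matrix.one_mul]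

/-- The operator inequality `(1 + G)⁻¹ ≥ 1 - G` for `G ≥ 0`. -/
lemma posSemidef_inv_add_sub_one {G : Matrix n n ℂ} (hG : G.PosSemidef) :
    ((1 + G)⁻¹ + G - 1).PosSemidef := by
  have hK := posDef_one_add hG
  have hu : IsUnit (1 + G).det := (isUnit_iff_isUnit_det _).mp hK.isUnit
  have h := hK.inv.posSemidef.mul_mul_conjTranspose_same G
  have e : G * (1 + G)⁻¹ * G = ((1 + G) - 1) * (1 + G)⁻¹ * ((1 + G) - 1) := by simp
  rw [hG.1.eq, e, Matrix.sub_mul, mul_nonsing_inv _ hu, Matrix.one_mul, Matrix.sub_mul,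
    Matrix.mul_sub (1 + G)⁻¹, nonsing_inv_mul _ hu, Matrix.mul_one] at h
  have e' : (1 + G)⁻¹ + G - 1 = 1 * (1 + G - 1) - (1 - (1 + G)⁻¹) := by
    rw [Matrix.one_mul]; abel
  rw [e']
  exact h

/-- The deterministic core of the bound. The range of the isometry `R` contains the columns of `Z`,
the Gram matrix of `Z` is `1 + Fᴴ * F`, and the compression of `X` to `Z` dominates `D * D`.
Comparing `R * Rᴴ` with the projector onto the range of `Z` gives
`det (1 + D * (1 + Fᴴ * F)⁻¹ * D) ≤ det (1 + Rᴴ * X * R)`; the operator inequality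
`(1 + Fᴴ * F)⁻¹ ≥ 1 - Fᴴ * F` and the matrix determinant lemma account for the other factor. -/
lemma det_one_add_sq_le {X : Matrix n n ℂ} (hX : X.PosSemidef) {R : Matrix n m ℂ}
    (hR : Rᴴ * R = 1) {Z : Matrix n a ℂ} (hZ : R * Rᴴ * Z = Z) {F : Matrix b a ℂ}
    (hZZ : Zᴴ * Z = 1 + Fᴴ * F) {D : Matrix a a ℂ} (hD : Dᴴ = D)
    (hZX : (Zᴴ * X * Z - D * D).PosSemidef) {E : Matrix b b ℂ}
    (hE : (E - F * (D * D) * Fᴴ).PosSemidef) :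
    (1 + D * D).det ≤ (1 + Rᴴ * X * R).det * (1 + E).det := by
  have hG : (Fᴴ * F).PosSemidef := posSemidef_conjTranspose_mul_self F
  have hN := posDef_one_add hG
  have hNu : IsUnit (1 + Fᴴ * F).det := (isUnit_iff_isUnit_det _).mp hN.isUnit
  set N := 1 + Fᴴ * F with hNdef
  have hM : (D * N⁻¹ * D).PosSemidef := by
    have := hN.inv.posSemidef.mul_mul_conjTranspose_same D
    rwa [hD] at this
  have hDD : (D * D).PosSemidef := by
    have := posSemidef_conjTranspose_mul_self D
    rwa [hD] at this
  have hFDF : (F * (D * D) * Fᴴ).PosSemidef := hDD.mul_mul_conjTranspose_same F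
  have step1 : (1 + D * N⁻¹ * D).det ≤ (1 + Rᴴ * X * R).det := by
    obtain ⟨C, hC⟩ := exists_conjTranspose_mul_self hX
    have e1 : (1 + Rᴴ * X * R).det = (1 + C * (R * Rᴴ) * Cᴴ).det := by
      have : Rᴴ * X * R = (Rᴴ * Cᴴ) * (C * R) := by rw [hC]; simp only [Matrix.mul_assoc]
      rw [this, det_one_add_mul_comm]; simp only [Matrix.mul_assoc]
    have e2 : (1 + D * N⁻¹ * D).det = N⁻¹.det * (N + D * D).det := by
      rw [Matrix.mul_assoc, det_one_add_mul_comm, ← det_mul, Matrix.mul_add,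
        nonsing_inv_mul _ hNu, Matrix.mul_assoc]
    have e3 : (1 + C * (Z * N⁻¹ * Zᴴ) * Cᴴ).det = N⁻¹.det * (N + Zᴴ * X * Z).det := by
      have : C * (Z * N⁻¹ * Zᴴ) * Cᴴ = (C * Z) * (N⁻¹ * Zᴴ * Cᴴ) := by
        simp only [Matrix.mul_assoc]
      rw [this, det_one_add_mul_comm, ← det_mul, Matrix.mul_add,
        nonsing_inv_mul _ hNu, hC]
      simp only [Matrix.mul_assoc]
    have h3 : (N + D * D).det ≤ (N + Zᴴ * X * Z).det := by
      refine det_le_det_of_sub (hN.add_posSemidef hDD) ?_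
      simpa using hZX
    rw [e1, e2]
    calc N⁻¹.det * (N + D * D).det ≤ N⁻¹.det * (N + Zᴴ * X * Z).det :=
          mul_le_mul_of_nonneg_left h3 hN.inv.det_pos.le
      _ = (1 + C * (Z * N⁻¹ * Zᴴ) * Cᴴ).det := e3.symm
      _ ≤ _ := by
        refine det_le_det_of_sub (posDef_one_add ?_) ?_
        · exact (hN.inv.posSemidef.mul_mul_conjTranspose_same Z).mul_mul_conjTranspose_same C
        · have h := posSemidef_projector_sub hR hZ (hZZ ▸ hN)
          rw [hZZ] at h
          have h' := h.mul_mul_conjTranspose_same C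
          convert h' using 1
          rw [Matrix.mul_sub, Matrix.sub_mul]; abel
  have step2 : (1 + D * D).det ≤ (1 + D * N⁻¹ * D + (F * D)ᴴ * (F * D)).det := by
    refine det_le_det_of_sub (posDef_one_add hDD) ?_
    have h := (posSemidef_inv_add_sub_one hG).mul_mul_conjTranspose_same D
    convert h using 1
    rw [conjTranspose_mul, hD]
    simp only [Matrix.mul_sub, Matrix.sub_mul, Matrix.mul_add, Matrix.add_mul, Matrix.mul_assoc,
      Matrix.one_mul, hNdef]
    abel
  have step3 : (1 + D * N⁻¹ * D + (F * D)ᴴ * (F * D)).det ≤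
      (1 + D * N⁻¹ * D).det * (1 + E).det := by
    have hK := posDef_one_add hM
    rw [det_add_mul _ _ ((isUnit_iff_isUnit_det _).mp hK.isUnit)]
    refine mul_le_mul_of_nonneg_left ?_ hK.det_pos.le
    calc _ ≤ (1 + F * (D * D) * Fᴴ).det := by
          refine det_le_det_of_sub
            (posDef_one_add (hK.inv.posSemidef.mul_mul_conjTranspose_same (F * D))) ?_
          have h := (posSemidef_one_sub_inv hM).mul_mul_conjTranspose_same (F * D)
          convert h using 1
          rw [conjTranspose_mul, hD]
          simp only [Matrix.mul_sub, Matrix.sub_mul, Matrix.mul_assoc, Matrix.one_mul]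
          abel
      _ ≤ (1 + E).det := by
          refine det_le_det_of_sub (posDef_one_add hFDF) ?_
          simpa using hE
  have hE' : E.PosSemidef := by simpa using hE.add hFDF
  exact step2.trans (step3.trans
    (mul_le_mul_of_nonneg_right step1 (posDef_one_add hE').det_pos.le))

end LoewnerDeterminants

/-! ### The Chebyshev filter polynomial -/

section FilterPolynomial

open Polynomial

/-- Monotonicity on `[1, ∞)`, from `T n (cosh θ) = cosh (n * θ)`. -/
lemma eval_T_mono (n : ℤ) {x y : ℝ} (hx : 1 ≤ x) (hxy : x ≤ y) :
    (Chebyshev.T ℝ n).eval x ≤ (Chebyshev.T ℝ n).eval y := by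
  have hy : 1 ≤ y := hx.trans hxy
  rw [← Real.cosh_arcosh hx, ← Real.cosh_arcosh hy, Chebyshev.T_real_cosh, Chebyshev.T_real_cosh,
    Real.cosh_le_cosh, abs_mul, abs_mul]
  refine mul_le_mul_of_nonneg_left ?_ (abs_nonneg _)
  rw [abs_of_nonneg (Real.arcosh_nonneg hx), abs_of_nonneg (Real.arcosh_nonneg hy)]
  exact (Real.arcosh_le_arcosh (by linarith) (by linarith)).mpr hxy

/-- The filter polynomial `T_{q-1}(2x/μ - 1)`: bounded by `1` on `[0, μ]` and at least
`T_{q-1}((2ν - μ)/μ)` on `[ν, ∞)`. -/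
lemma exists_filter_polynomial {q : ℕ} (hq : 1 ≤ q) {μ ν : ℝ} (hμ : 0 < μ) (hμν : μ < ν) :
    ∃ ψ : ℝ[X], ψ.natDegree < q ∧ (∀ x, 0 ≤ x → x ≤ μ → |ψ.eval x| ≤ 1) ∧
      ∀ x, ν ≤ x → (Chebyshev.T ℝ ((q : ℤ) - 1)).eval ((2 * ν - μ) / μ) ≤ ψ.eval x := by
  refine ⟨(Chebyshev.T ℝ ((q : ℤ) - 1)).comp (C (2 / μ) * X - 1), ?_, ?_, ?_⟩
  · rw [natDegree_comp, Chebyshev.natDegree_T]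
    have h1 : (C (2 / μ) * X - 1 : ℝ[X]).natDegree ≤ 1 := by compute_degree
    have h2 : ((q : ℤ) - 1).natAbs < q := by omega
    calc _ ≤ ((q : ℤ) - 1).natAbs * 1 := Nat.mul_le_mul_left _ h1
      _ < q := by omega
  · intro x hx0 hx
    rw [eval_comp]
    apply Chebyshev.abs_eval_T_real_le_one
    have h0 : 0 ≤ x / μ := by positivity
    have h1 : x / μ ≤ 1 := (div_le_one hμ).mpr hx
    have e : 2 / μ * x = 2 * (x / μ) := by ring
    simp only [eval_sub, eval_mul, eval_C, eval_X, eval_one, e]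
    rw [abs_le]; constructor <;> linarith
  · intro x hx
    rw [eval_comp]
    simp only [eval_sub, eval_mul, eval_C, eval_X, eval_one]
    have e : (2 * ν - μ) / μ = 2 / μ * ν - 1 := by field_simp
    have h1 : 1 ≤ ν / μ := (one_le_div hμ).mpr hμν.le
    have e' : 2 / μ * ν = 2 * (ν / μ) := by ring
    apply eval_T_mono
    · rw [e, e']; linarith
    · rw [e]
      have : 2 / μ * ν ≤ 2 / μ * x := mul_le_mul_of_nonneg_left hx (by positivity)
      linarith

end FilterPolynomial

/-! ### Splitting off the first `k` indices -/

section BlockSplitting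

variable {n k : ℕ}

lemma sum_fin_split {M : Type*} [AddCommMonoid M] (hkn : k < n) (f : Fin n → M) :
    ∑ i, f i = ∑ j : Fin k, f (Fin.castLE hkn.le j) +
      ∑ j : Fin (n - k), f ⟨k + (j : ℕ), by have := j.isLt; omega⟩ := by
  obtain ⟨m, rfl⟩ : ∃ m, n = k + m := ⟨n - k, by omega⟩
  rw [Fin.sum_univ_add]
  congr 1
  refine Fintype.sum_equiv (finCongr (by omega)) _ _ ?_
  intro j
  rfl

lemma sum_filter_le (hkn : k < n) (f : Fin n → ℝ) :
    ∑ i ∈ Finset.univ.filter (fun i : Fin n => k ≤ (i : ℕ)), f i =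
      ∑ j : Fin (n - k), f ⟨k + (j : ℕ), by have := j.isLt; omega⟩ := by
  rw [Finset.sum_filter, sum_fin_split hkn]
  have h : ∀ j : Fin k, ¬ k ≤ (j : ℕ) := fun j => by have := j.isLt; omega
  simp [h]

/-- Congruence of a diagonal matrix by a matrix whose block of first `k` rows is the identity. -/
lemma conjTranspose_mul_diagonal_mul_of_blocks (hkn : k < n) (Z : Matrix (Fin n) (Fin k) ℂ)
    (F : Matrix (Fin (n - k)) (Fin k) ℂ)
    (h1 : ∀ i j, Z (Fin.castLE hkn.le i) j = (1 : Matrix (Fin k) (Fin k) ℂ) i j)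
    (h2 : ∀ (i : Fin (n - k)) j, Z ⟨k + (i : ℕ), by have := i.isLt; omega⟩ j = F i j)
    (d : Fin n → ℂ) :
    Zᴴ * diagonal d * Z = diagonal (fun j => d (Fin.castLE hkn.le j)) +
      Fᴴ * diagonal (fun j : Fin (n - k) => d ⟨k + (j : ℕ), by have := j.isLt; omega⟩) * F := by
  ext i j
  rw [Matrix.mul_apply, sum_fin_split hkn, Matrix.add_apply, Matrix.mul_apply]
  congr 1
  · simp only [Matrix.mul_diagonal, conjTranspose_apply, h1]
    by_cases hij : i = j
    · subst hij; simp [Matrix.one_apply]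
    · simp [Matrix.one_apply, hij, Ne.symm hij]
  · simp only [Matrix.mul_diagonal, conjTranspose_apply, h2]

end BlockSplitting

/-! ### Filtered sketches lie in the Krylov space -/

section Krylov

lemma diagonalization_pow {n : ℕ} {U A : Matrix (Fin n) (Fin n) ℂ} {d : Fin n → ℂ}
    (hU' : Uᴴ * U = 1) (hA : A = U * diagonal d * Uᴴ) (i : ℕ) :
    A ^ (i + 1) = U * diagonal (fun j => d j ^ (i + 1)) * Uᴴ := by
  induction i with
  | zero => simpa using hA
  | succ i ih =>
    rw [pow_succ, ih, hA]
    calc _ = U * diagonal (fun j => d j ^ (i + 1)) * (Uᴴ * U) * diagonal d * Uᴴ := by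
          simp only [Matrix.mul_assoc]
      _ = _ := by
        rw [hU', Matrix.mul_one, Matrix.mul_assoc U, diagonal_mul_diagonal]
        simp only [← pow_succ]

/-- The orthogonal projector `Q * Qᴴ` fixes every matrix with columns in the column span of `Q`. -/
lemma projector_mul_eq {n l m : ℕ} {Q : Matrix (Fin n) (Fin m) ℂ} (hQ : Qᴴ * Q = 1)
    {B : Matrix (Fin n) (Fin l) ℂ}
    (h : ∀ j, (fun r => B r j) ∈ Submodule.span ℂ (Set.range fun c : Fin m => fun r => Q r c)) :
    Q * Qᴴ * B = B := by
  have key : ∀ v ∈ Submodule.span ℂ (Set.range fun c : Fin m => fun r => Q r c),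
      (Q * Qᴴ) *ᵥ v = v := by
    intro v hv
    induction hv using Submodule.span_induction with
    | mem x hx =>
      obtain ⟨c, rfl⟩ := hx
      have hc : (fun r => Q r c) = Q *ᵥ Pi.single c 1 := by
        ext r; simp
      change (Q * Qᴴ) *ᵥ (fun r => Q r c) = fun r => Q r c
      rw [hc, mulVec_mulVec, Matrix.mul_assoc, hQ, Matrix.mul_one]
    | zero => simp
    | add x y _ _ hx hy => rw [mulVec_add, hx, hy]
    | smul a x _ hx => rw [mulVec_smul, hx]
  ext r j
  exact congrFun (key _ (h j)) r

/-- A polynomial `x * ψ(x)` with `deg ψ < q`, applied to `A = U * diagonal lam * Uᴴ` and `Ω`,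
stays in the block Krylov space. -/
lemma projector_mul_filter {n l m q : ℕ} {U A : Matrix (Fin n) (Fin n) ℂ} {lam : Fin n → ℝ}
    (hU' : Uᴴ * U = 1) (hA : A = U * diagonal (fun i => (lam i : ℂ)) * Uᴴ)
    {Ω : Matrix (Fin n) (Fin l) ℂ} {Q : Matrix (Fin n) (Fin m) ℂ} (hQ : Qᴴ * Q = 1)
    (hspan : ∀ i : Fin q, ∀ j : Fin l, (fun r => (A ^ ((i : ℕ) + 1) * Ω) r j) ∈
        Submodule.span ℂ (Set.range fun c : Fin m => fun r => Q r c))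
    {ψ : Polynomial ℝ} (hψ : ψ.natDegree < q) :
    Q * Qᴴ * (U * diagonal (fun i => ((lam i * ψ.eval (lam i) : ℝ) : ℂ)) * Uᴴ * Ω) =
      U * diagonal (fun i => ((lam i * ψ.eval (lam i) : ℝ) : ℂ)) * Uᴴ * Ω := by
  have e : U * diagonal (fun i => ((lam i * ψ.eval (lam i) : ℝ) : ℂ)) * Uᴴ * Ω =
      ∑ i ∈ Finset.range q, ((ψ.coeff i : ℝ) : ℂ) • (A ^ (i + 1) * Ω) := by
    have hd : diagonal (fun i => ((lam i * ψ.eval (lam i) : ℝ) : ℂ)) =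
        ∑ i ∈ Finset.range q,
          ((ψ.coeff i : ℝ) : ℂ) • diagonal (fun j => (lam j : ℂ) ^ (i + 1)) := by
      ext a b
      rw [Matrix.sum_apply]
      by_cases hab : a = b
      · subst hab
        simp only [Matrix.smul_apply, diagonal_apply_eq, smul_eq_mul]
        rw [Polynomial.eval_eq_sum_range' hψ]
        push_cast
        rw [Finset.mul_sum]
        exact Finset.sum_congr rfl fun i _ => by ring
      · simp [hab]
    rw [hd, Matrix.mul_sum, Matrix.sum_mul, Matrix.sum_mul]
    refine Finset.sum_congr rfl fun i _ => ?_
    rw [diagonalization_pow hU' hA]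
    simp
  rw [e, Matrix.mul_sum]
  refine Finset.sum_congr rfl fun i hi => ?_
  rw [Matrix.mul_smul, projector_mul_eq hQ (hspan ⟨i, Finset.mem_range.mp hi⟩)]

end Krylov

/-! ### Loewner bound for the filtered tail block -/

section TailEstimate

open scoped ComplexOrder Matrix.Norms.L2Operator

lemma specNorm_nonneg {m n : ℕ} (W : Matrix (Fin m) (Fin n) ℂ) : 0 ≤ specNorm W :=
  norm_nonneg _

lemma posSemidef_specNorm_sq_sub {m n : ℕ} (W : Matrix (Fin m) (Fin n) ℂ) :
    (((specNorm W ^ 2 : ℝ) : ℂ) • (1 : Matrix (Fin m) (Fin m) ℂ) - W * Wᴴ).PosSemidef := by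
  refine PosSemidef.of_dotProduct_mulVec_nonneg ?_ ?_
  · refine IsHermitian.sub ?_ (isHermitian_mul_conjTranspose_self W)
    rw [IsHermitian, conjTranspose_smul, conjTranspose_one]
    simp
  · intro x
    have hn : ∀ {r : ℕ} (v : Fin r → ℂ), star v ⬝ᵥ v = ((‖WithLp.toLp 2 v‖ ^ 2 : ℝ) : ℂ) := by
      intro r v
      have := inner_self_eq_norm_sq_to_K (𝕜 := ℂ) (WithLp.toLp 2 v)
      rw [EuclideanSpace.inner_eq_star_dotProduct, dotProduct_comm] at this
      simpa using this
    have h1 : star x ⬝ᵥ ((W * Wᴴ) *ᵥ x) = star (Wᴴ *ᵥ x) ⬝ᵥ (Wᴴ *ᵥ x) := by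
      rw [← mulVec_mulVec, dotProduct_mulVec, star_mulVec, conjTranspose_conjTranspose]
    rw [sub_mulVec, dotProduct_sub, smul_mulVec, one_mulVec, dotProduct_smul, h1, hn, hn,
      smul_eq_mul]
    have h2 := l2_opNorm_mulVec Wᴴ (WithLp.toLp 2 x)
    rw [l2_opNorm_conjTranspose] at h2
    have h3 : ‖W‖ = specNorm W := l2_opNorm_def W
    rw [h3] at h2
    have h4 : ‖WithLp.toLp 2 (Wᴴ *ᵥ x)‖ ^ 2 ≤ specNorm W ^ 2 * ‖WithLp.toLp 2 x‖ ^ 2 := by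
      rw [← mul_pow]
      exact pow_le_pow_left₀ (norm_nonneg _) h2 2
    rw [← Complex.ofReal_mul, ← Complex.ofReal_sub]
    exact Complex.zero_le_real.mpr (by linarith)

/-- Loewner bound for `F * diagonal a * Fᴴ` with `F = diagonal f * W * diagonal g`: the inner
diagonal factor is at most `s`, then `W * Wᴴ ≤ ‖W‖²`, and the outer factors remain diagonal. -/
lemma posSemidef_diagonal_sub {m n : ℕ} (W : Matrix (Fin m) (Fin n) ℂ) (f e : Fin m → ℝ)
    (g a : Fin n → ℝ) {s : ℝ} (hs : 0 ≤ s) (hga : ∀ j, g j * a j * g j ≤ s)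
    (hfe : ∀ i, s * specNorm W ^ 2 * f i ^ 2 ≤ e i) :
    (diagonal (fun i => (e i : ℂ)) -
      (diagonal (fun i => (f i : ℂ)) * W * diagonal (fun j => (g j : ℂ))) *
        diagonal (fun j => (a j : ℂ)) *
      (diagonal (fun i => (f i : ℂ)) * W * diagonal (fun j => (g j : ℂ)))ᴴ).PosSemidef := by
  set Φ : Matrix (Fin m) (Fin m) ℂ := diagonal (fun i => (f i : ℂ)) with hΦ
  have hΦH : Φᴴ = Φ := by
    rw [hΦ, diagonal_conjTranspose]; congr 1; ext i; simp
  have p1 : ((s : ℂ) • (1 : Matrix (Fin n) (Fin n) ℂ) -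
      diagonal (fun j => ((g j * a j * g j : ℝ) : ℂ))).PosSemidef := by
    rw [smul_one_eq_diagonal, diagonal_sub]
    refine PosSemidef.diagonal fun j => ?_
    rw [← Complex.ofReal_sub]
    exact Complex.zero_le_real.mpr (by linarith [hga j])
  have p2 := p1.mul_mul_conjTranspose_same (Φ * W)
  have p3 := ((posSemidef_specNorm_sq_sub W).mul_mul_conjTranspose_same Φ).smul
    (Complex.zero_le_real.mpr hs)
  have p4 : (diagonal (fun i => ((e i - s * specNorm W ^ 2 * f i ^ 2 : ℝ) : ℂ))).PosSemidef := by
    refine PosSemidef.diagonal fun j => ?_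
    exact Complex.zero_le_real.mpr (by linarith [hfe j])
  have hg : (diagonal fun j => (g j : ℂ))ᴴ = diagonal fun j => (g j : ℂ) := by
    rw [diagonal_conjTranspose]; congr 1; ext i; simp
  have e1 : diagonal (fun j => ((g j * a j * g j : ℝ) : ℂ)) =
      diagonal (fun j => (g j : ℂ)) * diagonal (fun j => (a j : ℂ)) *
        diagonal (fun j => (g j : ℂ)) := by
    rw [diagonal_mul_diagonal, diagonal_mul_diagonal]; simp
  have e4 : diagonal (fun i => ((e i - s * specNorm W ^ 2 * f i ^ 2 : ℝ) : ℂ)) =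
      diagonal (fun i => (e i : ℂ)) - ((s * specNorm W ^ 2 : ℝ) : ℂ) • (Φ * Φ) := by
    rw [hΦ, diagonal_mul_diagonal, ← diagonal_smul, diagonal_sub]
    congr 1; ext i; simp only [Pi.smul_apply, smul_eq_mul]; push_cast; ring
  have p := (p2.add p3).add p4
  convert p using 1
  rw [e1, e4]
  simp only [conjTranspose_mul, hΦH, hg, Matrix.mul_sub, Matrix.sub_mul, Matrix.mul_assoc,
    smul_sub, Matrix.mul_smul, Matrix.smul_mul, Matrix.one_mul, Complex.ofReal_mul, mul_smul]
  abel

end TailEstimate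

/-! ### Real logarithms of the determinants -/

section RealForm

open scoped ComplexOrder

lemma det_one_add_im_re {n : ℕ} {S : Matrix (Fin n) (Fin n) ℂ} (hS : S.PosSemidef) :
    (1 + S).det.im = 0 ∧ 0 < (1 + S).det.re := by
  have h := (posDef_one_add hS).det_pos
  rw [Complex.lt_def] at h
  exact ⟨by simpa using h.2.symm, by simpa using h.1⟩

lemma posSemidef_diagonal_ofReal {n : ℕ} {d : Fin n → ℝ} (hd : ∀ i, 0 ≤ d i) :
    (diagonal (fun i => (d i : ℂ))).PosSemidef :=
  PosSemidef.diagonal fun i => Complex.zero_le_real.mpr (hd i)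

lemma det_one_add_diagonal {n : ℕ} (d : Fin n → ℝ) :
    (1 + diagonal (fun i => (d i : ℂ))).det = ((∏ i, (1 + d i) : ℝ) : ℂ) := by
  rw [← diagonal_one, diagonal_add, det_diagonal]; push_cast; rfl

lemma log_prod_one_add {n : ℕ} {d : Fin n → ℝ} (hd : ∀ i, 0 ≤ d i) :
    Real.log (∏ i, (1 + d i)) = ∑ i, Real.log (1 + d i) :=
  Real.log_prod fun i _ => by linarith [hd i]

lemma log_det_compress_le {n m : ℕ} {X : Matrix (Fin n) (Fin n) ℂ} (hX : X.PosSemidef)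
    {R : Matrix (Fin n) (Fin m) ℂ} (hR : Rᴴ * R = 1) :
    Real.log (1 + Rᴴ * X * R).det.re ≤ Real.log (1 + X).det.re := by
  have hT := hX.conjTranspose_mul_mul_same R
  exact Real.log_le_log (det_one_add_im_re hT).2
    (Complex.le_def.mp (det_one_add_compress_le hX hR)).1

/-- Logarithmic form of `det_one_add_sq_le` for diagonal `D` and `E`, with `d` the squared diagonal of `D`. -/
lemma sum_log_le {n m a b : ℕ} {X : Matrix (Fin n) (Fin n) ℂ} (hX : X.PosSemidef)
    {R : Matrix (Fin n) (Fin m) ℂ}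
    (hR : Rᴴ * R = 1) {Z : Matrix (Fin n) (Fin a) ℂ} (hZ : R * Rᴴ * Z = Z)
    {F : Matrix (Fin b) (Fin a) ℂ}
    (hZZ : Zᴴ * Z = 1 + Fᴴ * F) {d : Fin a → ℝ} (hd : ∀ j, 0 ≤ d j)
    (hZX : (Zᴴ * X * Z - diagonal (fun j => (d j : ℂ))).PosSemidef) {e : Fin b → ℝ}
    (he : ∀ j, 0 ≤ e j)
    (hE : (diagonal (fun j => (e j : ℂ)) - F * diagonal (fun j => (d j : ℂ)) * Fᴴ).PosSemidef) :
    ∑ j, Real.log (1 + d j) ≤ Real.log (1 + Rᴴ * X * R).det.re + ∑ j, Real.log (1 + e j) := by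
  set D : Matrix (Fin a) (Fin a) ℂ := diagonal (fun j => ((Real.sqrt (d j) : ℝ) : ℂ)) with hDdef
  have hD : Dᴴ = D := by
    rw [hDdef, diagonal_conjTranspose]; congr 1; ext i; simp
  have hDD : D * D = diagonal (fun j => (d j : ℂ)) := by
    rw [hDdef, diagonal_mul_diagonal]
    congr 1; ext j
    rw [← Complex.ofReal_mul, Real.mul_self_sqrt (hd j)]
  rw [← hDD] at hZX hE
  have h := det_one_add_sq_le hX hR hZ hZZ hD hZX hE
  rw [hDD, det_one_add_diagonal, det_one_add_diagonal] at h
  have hT := det_one_add_im_re (hX.conjTranspose_mul_mul_same R)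
  have h' := (Complex.le_def.mp h).1
  rw [Complex.ofReal_re, Complex.re_mul_ofReal] at h'
  have pd : 0 < ∏ j, (1 + d j) := Finset.prod_pos fun j _ => by linarith [hd j]
  have pe : 0 < ∏ j, (1 + e j) := Finset.prod_pos fun j _ => by linarith [he j]
  rw [← log_prod_one_add hd, ← log_prod_one_add he, ← Real.log_mul hT.2.ne' pe.ne']
  exact Real.log_le_log pd h'

end RealForm

/-! ### The structural bound -/

/-- Structural bound for the block Krylov log-determinant estimator. -/
theorem logdet_structural_bound_blockKrylov
    (n k l q : ℕ) (hk : 0 < k) (hkl : k ≤ l) (hln : l ≤ n) (hkn : k < n)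
    (hq : 1 ≤ q) (hql : q * l ≤ n)
    (U : Matrix (Fin n) (Fin n) ℂ) (hU : U * Uᴴ = 1)
    (lam : Fin n → ℝ) (hmono : Antitone lam) (hnn : ∀ i, 0 ≤ lam i)
    (hgapPos : 0 < lam ⟨k, hkn⟩)
    (hgap : lam ⟨k, hkn⟩ < lam ⟨k - 1, by omega⟩)
    (A : Matrix (Fin n) (Fin n) ℂ)
    (hA : A = U * Matrix.diagonal (fun i => (lam i : ℂ)) * Uᴴ)
    (Ω : Matrix (Fin n) (Fin l) ℂ)
    -- `Ω̂₁ = U₁*Ω` and `Ω̂₂ = U₂*Ω` where `U₁`, `U₂` collect the first `k`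
    -- and last `n - k` columns of `U`:
    (Ω1 : Matrix (Fin k) (Fin l) ℂ)
    (hΩ1 : Ω1 = (Matrix.of fun i (j : Fin k) => U i (Fin.castLE hkn.le j))ᴴ * Ω)
    (Ω2 : Matrix (Fin (n - k)) (Fin l) ℂ)
    (hΩ2 : Ω2 = (Matrix.of fun i (j : Fin (n - k)) =>
      U i ⟨k + (j : ℕ), by have := j.isLt; omega⟩)ᴴ * Ω)
    (hrank : IsUnit (Ω1 * Ω1ᴴ))
    -- `Q` is an orthonormal basis matrix of the block Krylov space:
    (Q : Matrix (Fin n) (Fin (q * l)) ℂ) (hQ : Qᴴ * Q = 1)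
    (hspan : ∀ i : Fin q, ∀ j : Fin l,
      (fun r => (A ^ ((i : ℕ) + 1) * Ω) r j) ∈
        Submodule.span ℂ (Set.range fun c : Fin (q * l) => fun r => Q r c))
    (T : Matrix (Fin (q * l)) (Fin (q * l)) ℂ) (hT : T = Qᴴ * A * Q) :
    let lamk : ℝ := lam ⟨k - 1, by omega⟩
    let lamk1 : ℝ := lam ⟨k, hkn⟩
    let γ : ℝ := (2 * lamk - lamk1) / lamk1
    let Tq : ℝ := (Polynomial.Chebyshev.T ℝ ((q : ℤ) - 1)).eval γ
    let pinv : Matrix (Fin l) (Fin k) ℂ := Ω1ᴴ * (Ω1 * Ω1ᴴ)⁻¹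
    let η : ℝ := lamk1 / lamk * (Tq ^ 2)⁻¹ * specNorm (Ω2 * pinv) ^ 2
    (1 + A).det.im = 0 ∧ 0 < (1 + A).det.re ∧
      (1 + T).det.im = 0 ∧ 0 < (1 + T).det.re ∧
      0 ≤ Real.log (1 + A).det.re - Real.log (1 + T).det.re ∧
      Real.log (1 + A).det.re - Real.log (1 + T).det.re ≤
        (∑ i ∈ Finset.univ.filter fun i : Fin n => k ≤ (i : ℕ),
          Real.log (1 + η * lam i)) +
        ∑ i ∈ Finset.univ.filter fun i : Fin n => k ≤ (i : ℕ),
          Real.log (1 + lam i) := by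
  intro lamk lamk1 γ Tq pinv η
  have hU' : Uᴴ * U = 1 := mul_eq_one_comm.mp hU
  have hΛ := posSemidef_diagonal_ofReal hnn
  set Λ : Matrix (Fin n) (Fin n) ℂ := diagonal (fun i => (lam i : ℂ)) with hΛdef
  -- In the eigenbasis of `A` the Krylov basis becomes the isometry `R`.
  set R : Matrix (Fin n) (Fin (q * l)) ℂ := Uᴴ * Q with hRdef
  have hR : Rᴴ * R = 1 := by
    rw [hRdef, conjTranspose_mul, conjTranspose_conjTranspose, Matrix.mul_assoc,
      ← Matrix.mul_assoc U, hU, Matrix.one_mul, hQ]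
  have hTR : T = Rᴴ * Λ * R := by
    rw [hT, hA, hRdef, conjTranspose_mul, conjTranspose_conjTranspose]
    simp only [Matrix.mul_assoc]
  have hdetA : (1 + A).det = (1 + Λ).det := by
    rw [hA, Matrix.mul_assoc, det_one_add_mul_comm, Matrix.mul_assoc, hU', Matrix.mul_one]
  have hlamk : 0 < lamk := hgapPos.trans hgap
  obtain ⟨ψ, hψdeg, hψ1, hψ2⟩ := exists_filter_polynomial hq hgapPos hgap
  have hTq : 1 ≤ Tq := by
    refine Polynomial.Chebyshev.one_le_eval_T_real _ ?_
    rw [one_le_div hgapPos]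
    have : lamk1 < lamk := hgap
    change lamk1 ≤ 2 * lamk - lamk1
    linarith
  have hη : 0 ≤ η := by
    have := specNorm_nonneg (Ω2 * pinv)
    have : 0 < lamk1 := hgapPos
    positivity
  have htop : ∀ j : Fin k, lamk ≤ lam (Fin.castLE hkn.le j) := fun j =>
    hmono (by rw [Fin.le_def]; simp; have := j.isLt; omega)
  have hbot : ∀ j : Fin (n - k), lam ⟨k + (j : ℕ), by have := j.isLt; omega⟩ ≤ lamk1 := fun j =>
    hmono (by rw [Fin.le_def]; simp)
  set φ : Fin n → ℝ := fun i => lam i * ψ.eval (lam i) with hφ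
  have hφtop : ∀ j : Fin k, lamk * Tq ≤ φ (Fin.castLE hkn.le j) := fun j =>
    mul_le_mul (htop j) (hψ2 _ (htop j)) (by linarith) (hnn _)
  have hφpos : ∀ j : Fin k, 0 < φ (Fin.castLE hkn.le j) := fun j =>
    lt_of_lt_of_le (by positivity) (hφtop j)
  set W := Ω2 * pinv with hW
  set g : Fin k → ℝ := fun j => (φ (Fin.castLE hkn.le j))⁻¹ with hg
  -- `Z` is the filtered sketch in the eigenbasis, normalised so that its top block is `1`.
  set Y : Matrix (Fin n) (Fin k) ℂ := Uᴴ * Ω * pinv with hY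
  set Z : Matrix (Fin n) (Fin k) ℂ :=
    diagonal (fun i => (φ i : ℂ)) * Y * diagonal (fun j => (g j : ℂ)) with hZdef
  set F : Matrix (Fin (n - k)) (Fin k) ℂ :=
    diagonal (fun i : Fin (n - k) => ((φ ⟨k + (i : ℕ), by have := i.isLt; omega⟩ : ℝ) : ℂ)) * W *
      diagonal (fun j => (g j : ℂ)) with hF
  have hYtop : ∀ i j, Y (Fin.castLE hkn.le i) j = (1 : Matrix (Fin k) (Fin k) ℂ) i j := by
    intro i j
    have h1 : Ω1 * pinv = 1 := by
      change Ω1 * (Ω1ᴴ * (Ω1 * Ω1ᴴ)⁻¹) = 1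
      rw [← Matrix.mul_assoc, mul_nonsing_inv _ ((isUnit_iff_isUnit_det _).mp hrank)]
    rw [← h1, hΩ1]
    rfl
  have hYbot : ∀ (i : Fin (n - k)) j, Y ⟨k + (i : ℕ), by have := i.isLt; omega⟩ j = W i j := by
    intro i j
    rw [hW, hΩ2]
    rfl
  have hZtop : ∀ i j, Z (Fin.castLE hkn.le i) j = (1 : Matrix (Fin k) (Fin k) ℂ) i j := by
    intro i j
    rw [hZdef, Matrix.mul_diagonal, Matrix.diagonal_mul, hYtop]
    by_cases hij : i = j
    · subst hij
      rw [Matrix.one_apply_eq, mul_one, ← Complex.ofReal_mul, hg,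
        mul_inv_cancel₀ (hφpos i).ne', Complex.ofReal_one]
    · simp [hij]
  have hZbot : ∀ (i : Fin (n - k)) j,
      Z ⟨k + (i : ℕ), by have := i.isLt; omega⟩ j = F i j := by
    intro i j
    rw [hZdef, hF, Matrix.mul_diagonal, Matrix.diagonal_mul, Matrix.mul_diagonal,
      Matrix.diagonal_mul, hYbot]
  have hRZ : R * Rᴴ * Z = Z := by
    have h := projector_mul_filter hU' hA hQ hspan hψdeg
    have h' := congrArg (fun B => Uᴴ * B * pinv * diagonal (fun j => (g j : ℂ))) h
    have e1 : Z = Uᴴ * (U * diagonal (fun i => (φ i : ℂ)) * Uᴴ * Ω) * pinv *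
        diagonal (fun j => (g j : ℂ)) := by
      rw [hZdef, hY]
      simp only [← Matrix.mul_assoc, hU', Matrix.one_mul]
    have e2 : R * Rᴴ * Z = Uᴴ * (Q * Qᴴ * (U * diagonal (fun i => (φ i : ℂ)) * Uᴴ * Ω)) * pinv *
        diagonal (fun j => (g j : ℂ)) := by
      rw [hZdef, hY, hRdef, conjTranspose_mul, conjTranspose_conjTranspose]
      simp only [Matrix.mul_assoc]
    rw [e2, h', ← e1]
  have hZZ : Zᴴ * Z = 1 + Fᴴ * F := by
    have h := conjTranspose_mul_diagonal_mul_of_blocks hkn Z F hZtop hZbot (fun _ => 1)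
    simpa using h
  open scoped ComplexOrder in
  have hZX : (Zᴴ * Λ * Z -
      diagonal (fun j => ((lam (Fin.castLE hkn.le j) : ℝ) : ℂ))).PosSemidef := by
    rw [hΛdef, conjTranspose_mul_diagonal_mul_of_blocks hkn Z F hZtop hZbot, add_sub_cancel_left]
    exact (posSemidef_diagonal_ofReal fun j => hnn _).conjTranspose_mul_mul_same F
  open scoped ComplexOrder in
  have hE : (diagonal (fun j : Fin (n - k) =>
        ((η * lam ⟨k + (j : ℕ), by have := j.isLt; omega⟩ : ℝ) : ℂ)) -
      F * diagonal (fun j => ((lam (Fin.castLE hkn.le j) : ℝ) : ℂ)) * Fᴴ).PosSemidef := by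
    have hk1 : 0 < lamk1 := hgapPos
    refine posSemidef_diagonal_sub W _ _ g _ (s := (lamk * Tq ^ 2)⁻¹) (by positivity) ?_ ?_
    · intro j
      -- `φ = lam * ψ` with `lam ≥ lamk` and `ψ ≥ Tq`, so `lam / φ ^ 2 ≤ 1 / (lamk * Tq ^ 2)`.
      have ha : 0 < lam (Fin.castLE hkn.le j) := hlamk.trans_le (htop j)
      have hp : Tq ≤ ψ.eval (lam (Fin.castLE hkn.le j)) := hψ2 _ (htop j)
      have e : g j * lam (Fin.castLE hkn.le j) * g j =
          (lam (Fin.castLE hkn.le j) * ψ.eval (lam (Fin.castLE hkn.le j)) ^ 2)⁻¹ := by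
        have hp0 : ψ.eval (lam (Fin.castLE hkn.le j)) ≠ 0 := by linarith
        simp only [hg, hφ]
        field_simp
      rw [e]
      refine inv_anti₀ (by positivity) ?_
      exact mul_le_mul (htop j) (pow_le_pow_left₀ (by linarith) hp 2) (by positivity) ha.le
    · intro i
      set x := lam ⟨k + (i : ℕ), by have := i.isLt; omega⟩ with hx
      have hx0 : 0 ≤ x := hnn _
      have hb := hψ1 x hx0 (hbot i)
      have h2 : ψ.eval x ^ 2 ≤ 1 := (sq_le_one_iff_abs_le_one _).mpr hb
      have h3 : (x * ψ.eval x) ^ 2 ≤ lamk1 * x := by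
        calc (x * ψ.eval x) ^ 2 = x * x * ψ.eval x ^ 2 := by ring
          _ ≤ x * x * 1 := mul_le_mul_of_nonneg_left h2 (by positivity)
          _ ≤ lamk1 * x := by
            rw [mul_one]; exact mul_le_mul_of_nonneg_right (hbot i) hx0
      calc (lamk * Tq ^ 2)⁻¹ * specNorm W ^ 2 * (x * ψ.eval x) ^ 2
          ≤ (lamk * Tq ^ 2)⁻¹ * specNorm W ^ 2 * (lamk1 * x) :=
            mul_le_mul_of_nonneg_left h3 (by positivity)
        _ = η * x := by
            change _ = lamk1 / lamk * (Tq ^ 2)⁻¹ * specNorm W ^ 2 * x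
            rw [mul_inv]; ring
  have hmain := sum_log_le hΛ hR hRZ hZZ (fun j => hnn _) hZX
    (fun j => mul_nonneg hη (hnn _)) hE
  have hlogA : Real.log (1 + Λ).det.re = ∑ i, Real.log (1 + lam i) := by
    rw [hΛdef, det_one_add_diagonal, Complex.ofReal_re, log_prod_one_add hnn]
  rw [hdetA, hTR]
  refine ⟨(det_one_add_im_re hΛ).1, (det_one_add_im_re hΛ).2,
    (det_one_add_im_re (hΛ.conjTranspose_mul_mul_same R)).1,
    (det_one_add_im_re (hΛ.conjTranspose_mul_mul_same R)).2,
    sub_nonneg.mpr (log_det_compress_le hΛ hR), ?_⟩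
  rw [sum_filter_le hkn, sum_filter_le hkn, hlogA, sum_fin_split hkn]
  linarith
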